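/- Every separable metric space M admits a metric c₀(ℕ)-frame; that is, there exist a sequence (f_n)_{n∈ℕ} of Lipschitz functions f_n : M → ℝ such that (f_n(x))_n converges to 0 for every x ∈ M, and constants a, b > 0 such that a·d(x,y) ≤ sup_n |f_n(x) − f_n(y)| ≤ b·d(x,y) for all x, y ∈ M. -/

import Mathlib

/-!
Fix a dense sequence `u` and a scale `s > 0`. The `n`-th function at scale `s` lives near
`u (n + 1)` and vanishes near `u 0, …, u n`. Every point is within `s` of some `u m`, so only
finitely many functions at that scale are nonzero there. If `dist x y ≥ 5 * s`, then `x` or `y` is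
at distance at least `2 * s` from `u 0`; at that point, the function attached to the first term of
`u` closer than `2 * s` has value at least `s`, and it vanishes at the other point. Letting `s` run
through the powers of `2` gives a lower bound at every distance. Convergence to `0` survives: at
small scales all functions are uniformly small, and once `s ≥ dist x (u 0)` they all vanish at `x`.
-/

open Filter Metric Set Topology

lemma finite_setOf_zpow_mem_Icc {K : Type*} [Field K] [LinearOrder K] [IsStrictOrderedRing K]
    [Archimedean K] {r a b : K} (hr : 1 < r) (ha : 0 < a) :
    {k : ℤ | r ^ k ∈ Icc a b}.Finite := by
  rcases lt_or_ge b a with hba | hab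
  · simp [Icc_eq_empty_of_lt hba]
  obtain ⟨i, hi, -⟩ := exists_mem_Ico_zpow ha hr
  obtain ⟨j, -, hj⟩ := exists_mem_Ico_zpow (ha.trans_le hab) hr
  refine (finite_Icc i (j + 1)).subset fun k ⟨hak, hkb⟩ => ⟨?_, ?_⟩
  · exact (zpow_le_zpow_iff_right₀ hr).1 (hi.trans hak)
  · exact (zpow_le_zpow_iff_right₀ hr).1 (hkb.trans hj.le)

section Bump

variable {M : Type*} [PseudoMetricSpace M]

/-- A bump function on the set difference of the ball of radius `R` about `p` and the closed
`r`-neighbourhood of `A`: it is positive there and zero elsewhere. The set `A` is meant to be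
nonempty, since `infDist x ∅ = 0`. -/
noncomputable def ballDiffBump (r R : ℝ) (A : Set M) (p x : M) : ℝ :=
  max 0 (min (R - dist x p) (infDist x A - r))

section BallDiff

variable {r R c : ℝ} {A : Set M} {p x : M}

lemma lipschitzWith_ballDiffBump (r R : ℝ) (A : Set M) (p : M) :
    LipschitzWith 1 (ballDiffBump r R A p) := by
  have hball : LipschitzWith 1 fun x => R - dist x p := by
    simpa using (LipschitzWith.const R).sub (LipschitzWith.dist_left p)
  have hdiff : LipschitzWith 1 fun x => infDist x A - r := by
    simpa using (lipschitz_infDist_pt A).sub (LipschitzWith.const r)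
  have hmin := (hball.min hdiff).const_max 0
  rwa [max_self] at hmin

lemma ballDiffBump_nonneg : 0 ≤ ballDiffBump r R A p x :=
  le_max_left _ _

lemma le_ballDiffBump_iff (hc : 0 < c) :
    c ≤ ballDiffBump r R A p x ↔ c + dist x p ≤ R ∧ c + r ≤ infDist x A := by
  simp only [ballDiffBump, le_max_iff, hc.not_ge, false_or, le_min_iff, le_sub_iff_add_le]

lemma ballDiffBump_eq_zero_of_le_dist (h : R ≤ dist x p) : ballDiffBump r R A p x = 0 :=
  max_eq_left <| (min_le_left _ _).trans <| sub_nonpos.2 h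

end BallDiff

/-- The bump function at scale `s` around the landmark `u (n + 1)`, cut off near the earlier
landmarks `u 0, …, u n`. The landmark `u 0` carries no bump, so that the set of earlier landmarks is
never empty. -/
noncomputable def landmarkBump (u : ℕ → M) (s : ℝ) (n : ℕ) : M → ℝ :=
  ballDiffBump s (3 * s) (u '' Iic n) (u (n + 1))

variable {u : ℕ → M} {s c : ℝ} {m n : ℕ} {x y : M}

lemma lipschitzWith_landmarkBump (u : ℕ → M) (s : ℝ) (n : ℕ) :
    LipschitzWith 1 (landmarkBump u s n) :=
  lipschitzWith_ballDiffBump _ _ _ _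

lemma abs_landmarkBump_sub_le_dist (u : ℕ → M) (s : ℝ) (n : ℕ) (x y : M) :
    |landmarkBump u s n x - landmarkBump u s n y| ≤ dist x y := by
  simpa [Real.dist_eq] using (lipschitzWith_landmarkBump u s n).dist_le_mul x y

lemma landmarkBump_nonneg : 0 ≤ landmarkBump u s n x :=
  ballDiffBump_nonneg

lemma le_three_mul_of_le_landmarkBump (hc : 0 < c) (h : c ≤ landmarkBump u s n x) : c ≤ 3 * s :=
  (le_add_of_nonneg_right dist_nonneg).trans ((le_ballDiffBump_iff hc).1 h).1

lemma lt_dist_of_landmarkBump_pos (h : 0 < landmarkBump u s n x) (hmn : m ≤ n) :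
    s < dist x (u m) :=
  calc
    s < landmarkBump u s n x + s := lt_add_of_pos_left s h
    _ ≤ infDist x (u '' Iic n) := ((le_ballDiffBump_iff h).1 le_rfl).2
    _ ≤ dist x (u m) := infDist_le_dist_of_mem (mem_image_of_mem u hmn)

lemma exists_dist_lt_and_le_landmarkBump (hu : DenseRange u) (hs : 0 < s)
    (hx : 2 * s ≤ dist x (u 0)) :
    ∃ n, dist x (u (n + 1)) < 2 * s ∧ s ≤ landmarkBump u s n x := by
  classical
  have hclose : ∃ n, dist x (u n) < 2 * s := hu.exists_dist_lt x (by positivity)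
  obtain ⟨n, hn⟩ : ∃ n, Nat.find hclose = n + 1 :=
    Nat.exists_eq_add_one.2 <| (Nat.find_pos hclose).2 hx.not_gt
  have hlt : dist x (u (n + 1)) < 2 * s := hn ▸ Nat.find_spec hclose
  have hfar : 2 * s ≤ infDist x (u '' Iic n) := by
    rw [le_infDist (nonempty_Iic.image u), forall_mem_image]
    exact fun m hm => not_lt.1 (Nat.find_min hclose (hn ▸ Nat.lt_succ_of_le hm))
  exact ⟨n, hlt, (le_ballDiffBump_iff hs).2 ⟨by linarith, by linarith⟩⟩

lemma exists_le_abs_landmarkBump_sub (hu : DenseRange u) (hs : 0 < s) (hxy : 5 * s ≤ dist x y) :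
    ∃ n, s ≤ |landmarkBump u s n x - landmarkBump u s n y| := by
  wlog hx : 2 * s ≤ dist x (u 0) generalizing x y
  · have hy : 2 * s ≤ dist y (u 0) := by linarith [dist_triangle_right x y (u 0)]
    simpa only [abs_sub_comm (landmarkBump u s _ y)] using this (dist_comm x y ▸ hxy) hy
  obtain ⟨n, hxn, hn⟩ := exists_dist_lt_and_le_landmarkBump hu hs hx
  have hy : landmarkBump u s n y = 0 :=
    ballDiffBump_eq_zero_of_le_dist (by linarith [dist_triangle_right x y (u (n + 1))])
  exact ⟨n, by simpa only [hy, sub_zero] using hn.trans (le_abs_self _)⟩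

lemma exists_dist_le_ten_mul_abs_landmarkBump_sub (hu : DenseRange u) (x y : M) :
    ∃ (k : ℤ) (n : ℕ),
      dist x y ≤ 10 * |landmarkBump u (2 ^ k) n x - landmarkBump u (2 ^ k) n y| := by
  rcases dist_nonneg.eq_or_lt' (a := dist x y) with hxy | hxy
  · exact ⟨0, 0, hxy.trans_le (by positivity)⟩
  obtain ⟨k, hk, hk'⟩ := exists_mem_Ico_zpow (show 0 < dist x y / 5 by positivity) one_lt_two
  obtain ⟨n, hn⟩ := exists_le_abs_landmarkBump_sub hu (zpow_pos two_pos k)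
    (show 5 * 2 ^ k ≤ dist x y by linarith)
  rw [zpow_add_one₀ two_ne_zero] at hk'
  exact ⟨k, n, by linarith⟩

lemma tendsto_landmarkBump_cofinite {ι : Type*} {s : ι → ℝ} (hu : DenseRange u)
    (hs : ∀ i, 0 < s i) (hfin : ∀ a b, 0 < a → {i | s i ∈ Icc a b}.Finite) (x : M) :
    Tendsto (fun p : ι × ℕ => landmarkBump u (s p.1) p.2 x) cofinite (𝓝 0) := by
  rw [Metric.tendsto_nhds]
  intro ε hε
  choose m hm using fun i => hu.exists_dist_lt x (hs i)
  have hlarge : {p : ι × ℕ | ε ≤ landmarkBump u (s p.1) p.2 x}.Finite := by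
    refine ((hfin (ε / 3) (dist x (u 0)) (by positivity)).biUnion fun i _ =>
      (finite_Iio (m i)).image (Prod.mk i)).subset ?_
    rintro ⟨i, n⟩ (hp : ε ≤ landmarkBump u (s i) n x)
    have hpos : 0 < landmarkBump u (s i) n x := hε.trans_le hp
    have hlow : ε / 3 ≤ s i := by linarith [le_three_mul_of_le_landmarkBump hε hp]
    have hhigh : s i ≤ dist x (u 0) := (lt_dist_of_landmarkBump_pos hpos n.zero_le).le
    have hn : n < m i := by
      by_contra! hmn
      exact (hm i).not_gt (lt_dist_of_landmarkBump_pos hpos hmn)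
    exact mem_biUnion (show i ∈ {i | s i ∈ Icc _ _} from ⟨hlow, hhigh⟩) ⟨n, hn, rfl⟩
  filter_upwards [hlarge.compl_mem_cofinite] with p hp
  rw [Real.dist_0_eq_abs, abs_of_nonneg landmarkBump_nonneg]
  exact not_le.1 hp

end Bump

theorem separable_metric_space_admits_metric_c0_frame_general
    (M : Type*) [PseudoMetricSpace M] [TopologicalSpace.SeparableSpace M] :
    ∃ (f : ℕ → M → ℝ) (a b : ℝ), 0 < a ∧ 0 < b ∧
      (∀ n, ∃ K, LipschitzWith K (f n)) ∧
      (∀ x : M, Tendsto (fun n => f n x) atTop (𝓝 0)) ∧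
      (∀ x y : M, a * dist x y ≤ ⨆ n, |f n x - f n y|) ∧
      (∀ x y : M, (⨆ n, |f n x - f n y|) ≤ b * dist x y) := by
  rcases isEmpty_or_nonempty M with _ | _
  · exact ⟨0, 1, 1, one_pos, one_pos, fun _ => ⟨0, isEmptyElim⟩,
      isEmptyElim, isEmptyElim, isEmptyElim⟩
  obtain ⟨u, hu⟩ := TopologicalSpace.exists_dense_seq M
  let e : ℕ ≃ ℤ × ℕ := (Denumerable.eqv (ℤ × ℕ)).symm
  let f (n : ℕ) : M → ℝ := landmarkBump u (2 ^ (e n).1) (e n).2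
  have hle (x y : M) (n : ℕ) : |f n x - f n y| ≤ dist x y := abs_landmarkBump_sub_le_dist ..
  refine ⟨f, 1 / 10, 1, by norm_num, one_pos, fun n => ⟨1, lipschitzWith_landmarkBump _ _ _⟩,
    fun x => ?_, fun x y => ?_, fun x y => (one_mul (dist x y)).symm ▸ ciSup_le (hle x y)⟩
  · rw [← Nat.cofinite_eq_atTop]
    exact (tendsto_landmarkBump_cofinite hu (fun k : ℤ => zpow_pos two_pos k)
      (fun _ _ => finite_setOf_zpow_mem_Icc one_lt_two) x).comp e.injective.tendsto_cofinite
  · obtain ⟨k, n, hkn⟩ := exists_dist_le_ten_mul_abs_landmarkBump_sub hu x y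
    have hsup : |f (e.symm (k, n)) x - f (e.symm (k, n)) y| ≤ ⨆ n, |f n x - f n y| :=
      le_ciSup ⟨dist x y, forall_mem_range.2 (hle x y)⟩ _
    simp only [f, Equiv.apply_symm_apply] at hsup
    linarith

/-- **Every separable metric space admits a metric `c₀(ℕ)`-frame**: there exist a sequence
`(f_n)` of Lipschitz functions `f_n : M → ℝ` such that `(f_n x)_n` converges to `0` for every
`x ∈ M`, and constants `a, b > 0` with
`a * d(x,y) ≤ sup_n |f_n x - f_n y| ≤ b * d(x,y)` for all `x, y ∈ M`. -/
theorem separable_metric_space_admits_metric_c0_frame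
    (M : Type*) [MetricSpace M] [TopologicalSpace.SeparableSpace M] :
    ∃ (f : ℕ → M → ℝ) (a b : ℝ), 0 < a ∧ 0 < b ∧
      (∀ n, ∃ K, LipschitzWith K (f n)) ∧
      (∀ x : M, Filter.Tendsto (fun n => f n x) Filter.atTop (nhds 0)) ∧
      (∀ x y : M, a * dist x y ≤ ⨆ n, |f n x - f n y|) ∧
      (∀ x y : M, (⨆ n, |f n x - f n y|) ≤ b * dist x y) :=
  separable_metric_space_admits_metric_c0_frame_general M
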